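/- Threshold Locality Lemma: for every k ∈ ℕ and every δ ∈ [0,1] there is a constant C ∈ ℕ such that for all kCNF formulas φ: σ(φ) ≥ δ holds if and only if σ(ψ) ≥ δ holds for every subset ψ ⊆ φ with |ψ| ≤ C. -/

import Mathlib

/-!
The reverse implication asks that every `k`CNF formula `φ` with `σ(φ) < δ` has a subformula of
bounded size with the same property. It follows from two facts, both for fixed `k`:

* Gap: for some `ε > 0`, every `k`CNF formula with `σ(φ) < δ` even has `σ(φ) ≤ δ - ε`. This holds
  since the set of all values `1 - σ(φ)` is well-ordered (`unsatSpectrum_isPWO`).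
* Approximation: for every `ε > 0`, some `ψ ⊆ φ` of bounded size has `σ(ψ) ≤ σ(φ) + ε`
  (`exists_small_approx`).

Both are proved by induction on `k`, using the same dichotomy (`packing_or_hitting`). Either `φ`
contains a packing of `p` clauses, which alone forces `σ` below `(1 - 2⁻ᵏ)ᵖ`
(`satProb_packing_le`), or at most `p * k` variables `V` hit every clause; a formula containing the empty
clause has `σ(φ) = 0` and is treated separately. In the case of a hitting set `V`,
`σ(φ)` is the average, over the boundedly many assignments of `V`, of the satisfaction probabilities of
formulas with shorter clauses (`satProb_eq_avg_reduct`). Well-ordering survives such averages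
because the additive submonoid generated by a well-ordered set of nonnegative reals is well-ordered;
approximations of the individual terms combine to one of `φ` by taking the union of their lifts.
-/

open Finset

open scoped Classical

/-- A literal is a propositional variable (a natural number) together with a sign. -/
abbrev PLit := ℕ × Bool

/-- A clause is a finite set of literals. -/
abbrev PClause := Finset PLit

/-- A CNF formula is a finite set of clauses. -/
abbrev PCnf := Finset PClause

/-- A clause is valid if it contains no variable together with its negation. -/
def clauseValid (c : PClause) : Prop := ∀ v : ℕ, ¬((v, true) ∈ c ∧ (v, false) ∈ c)

/-- The variables occurring in a clause. -/
def clauseVars (c : PClause) : Finset ℕ := c.image Prod.fst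

/-- A CNF formula is valid if all of its clauses are. -/
def cnfValid (φ : PCnf) : Prop := ∀ c ∈ φ, clauseValid c

/-- The variables occurring in a CNF formula. -/
def cnfVars (φ : PCnf) : Finset ℕ := φ.sup clauseVars

/-- `φ` is a `k`CNF formula: all clauses are valid and have at most `k` literals. -/
def IsKCnf (k : ℕ) (φ : PCnf) : Prop := cnfValid φ ∧ ∀ c ∈ φ, c.card ≤ k

/-- An assignment is represented by the finite set `S` of variables set to true;
`litSat S l` says that the literal `l` is made true. -/
def litSat (S : Finset ℕ) (l : PLit) : Prop := if l.2 then l.1 ∈ S else l.1 ∉ S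

/-- A clause is satisfied if it contains a literal made true. -/
def clauseSat (S : Finset ℕ) (c : PClause) : Prop := ∃ l ∈ c, litSat S l

/-- A CNF formula is satisfied if all of its clauses are. -/
def cnfSat (S : Finset ℕ) (φ : PCnf) : Prop := ∀ c ∈ φ, clauseSat S c

/-- The satisfaction probability `σ(φ)`: the fraction of assignments
`β : vars(φ) → {0,1}` (represented as subsets of `cnfVars φ`) satisfying `φ`. -/
noncomputable def satProb (φ : PCnf) : ℝ :=
  ((cnfVars φ).powerset.filter (fun S => cnfSat S φ)).card / 2 ^ (cnfVars φ).card

/-- The set of satisfaction probabilities of `k`CNF formulas. -/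
def kcnfSpectrum (k : ℕ) : Set ℝ := {x | ∃ φ : PCnf, IsKCnf k φ ∧ satProb φ = x}

/-- A packing: a set of pairwise variable-disjoint clauses. -/
def IsPacking (π : PCnf) : Prop :=
  ∀ c ∈ π, ∀ c' ∈ π, c ≠ c' → Disjoint (clauseVars c) (clauseVars c')

/-- A sunflower with core `c`. -/
def IsSunflower (ψ : PCnf) (c : PClause) : Prop :=
  (∀ e ∈ ψ, c ⊆ e) ∧
    ∀ e ∈ ψ, ∀ e' ∈ ψ, e ≠ e' → clauseVars e ∩ clauseVars e' = clauseVars c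

/-- The link of a clause `c` in `φ`: all superclauses of `c` in `φ`. -/
noncomputable def link (φ : PCnf) (c : PClause) : PCnf := φ.filter (fun e => c ⊆ e)

/-- The literal `l` is made true by the assignment `β : V → {0,1}` represented by `S ⊆ V`. -/
def litTrue (V S : Finset ℕ) (l : PLit) : Prop :=
  l.1 ∈ V ∧ (if l.2 then l.1 ∈ S else l.1 ∉ S)

/-- The literal `l` is made false by the assignment `β : V → {0,1}` represented by `S ⊆ V`. -/
def litFalse (V S : Finset ℕ) (l : PLit) : Prop :=
  l.1 ∈ V ∧ ¬(if l.2 then l.1 ∈ S else l.1 ∉ S)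

/-- The restriction `φ|_β` of `φ` to the assignment `β : V → {0,1}` represented by
`S ⊆ V`: remove every clause containing a literal made true by `β`, delete from the
remaining clauses all literals made false by `β`, and add the unit clause `{v}` for
each `v ∈ S` and the unit clause `{¬v}` for each `v ∈ V \ S`. -/
noncomputable def restrict (φ : PCnf) (V S : Finset ℕ) : PCnf :=
  ((φ.filter fun c => ¬ ∃ l ∈ c, litTrue V S l).image fun c =>
      c.filter fun l => ¬ litFalse V S l)
    ∪ S.image (fun v => ({(v, true)} : PClause))
    ∪ (V \ S).image (fun v => ({(v, false)} : PClause))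

/-! ### Averages over assignments -/

/-- The average of `f` over all subsets of `W`, i.e. its expectation under a uniformly random
assignment of the variables in `W`. -/
noncomputable def avg (W : Finset ℕ) (f : Finset ℕ → ℝ) : ℝ :=
  (∑ S ∈ W.powerset, f S) / 2 ^ W.card

/-- The `0/1`-valued indicator that the assignment `S` satisfies `φ`. -/
noncomputable def satInd (φ : PCnf) (S : Finset ℕ) : ℝ := if cnfSat S φ then 1 else 0

lemma sum_powerset_union {U V : Finset ℕ} (h : Disjoint U V) (f : Finset ℕ → ℝ) :
    ∑ S ∈ (U ∪ V).powerset, f S = ∑ A ∈ U.powerset, ∑ B ∈ V.powerset, f (A ∪ B) := by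
  induction U using Finset.induction_on generalizing f with
  | empty => simp
  | insert a U ha ih =>
    rw [Finset.disjoint_insert_left] at h
    rw [Finset.insert_union, Finset.sum_powerset_insert (by simp [ha, h.1]), ih h.2,
      Finset.sum_powerset_insert ha, ih h.2 (fun t => f (insert a t))]
    simp only [Finset.insert_union]

lemma avg_union {U V : Finset ℕ} (h : Disjoint U V) (f : Finset ℕ → ℝ) :
    avg (U ∪ V) f = avg U (fun A => avg V (fun B => f (A ∪ B))) := by
  unfold avg
  rw [sum_powerset_union h, Finset.card_union_of_disjoint h, pow_add, ← Finset.sum_div,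
    div_div, mul_comm]

lemma avg_mono {W : Finset ℕ} {f g : Finset ℕ → ℝ} (h : ∀ S ⊆ W, f S ≤ g S) :
    avg W f ≤ avg W g := by
  unfold avg
  gcongr with S hS
  exact h S (Finset.mem_powerset.1 hS)

lemma avg_congr {W : Finset ℕ} {f g : Finset ℕ → ℝ} (h : ∀ S ⊆ W, f S = g S) :
    avg W f = avg W g :=
  le_antisymm (avg_mono fun S hS => (h S hS).le) (avg_mono fun S hS => (h S hS).ge)

lemma avg_const (W : Finset ℕ) (c : ℝ) : avg W (fun _ => c) = c := by
  simp [avg, Finset.card_powerset]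

lemma avg_add (W : Finset ℕ) (f g : Finset ℕ → ℝ) :
    avg W (fun S => f S + g S) = avg W f + avg W g := by
  simp [avg, Finset.sum_add_distrib, add_div]

lemma avg_mul_const (W : Finset ℕ) (f : Finset ℕ → ℝ) (c : ℝ) :
    avg W (fun S => f S * c) = avg W f * c := by
  simp only [avg, ← Finset.sum_mul]; ring

lemma avg_const_mul (W : Finset ℕ) (f : Finset ℕ → ℝ) (c : ℝ) :
    avg W (fun S => c * f S) = c * avg W f := by
  simp only [avg, ← Finset.mul_sum]; ring

/-! ### Satisfaction probability as an average -/

lemma satProb_eq_avg_vars (φ : PCnf) : satProb φ = avg (cnfVars φ) (satInd φ) := by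
  simp [satProb, avg, satInd]

lemma mem_cnfVars {φ : PCnf} {c : PClause} (hc : c ∈ φ) {l : PLit} (hl : l ∈ c) :
    l.1 ∈ cnfVars φ :=
  Finset.le_sup (f := clauseVars) hc (Finset.mem_image_of_mem _ hl)

lemma clauseVars_subset {φ : PCnf} {c : PClause} (hc : c ∈ φ) : clauseVars c ⊆ cnfVars φ :=
  Finset.le_sup (f := clauseVars) hc

lemma cnfVars_mono {ψ φ : PCnf} (h : ψ ⊆ φ) : cnfVars ψ ⊆ cnfVars φ := Finset.sup_mono h

lemma clauseSat_congr {c : PClause} {S T : Finset ℕ}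
    (h : ∀ v ∈ clauseVars c, (v ∈ S ↔ v ∈ T)) : clauseSat S c ↔ clauseSat T c := by
  refine exists_congr fun l => and_congr_right fun hl => ?_
  simp only [litSat, h l.1 (Finset.mem_image_of_mem _ hl)]

lemma satInd_congr {φ : PCnf} {S T : Finset ℕ}
    (h : ∀ v ∈ cnfVars φ, (v ∈ S ↔ v ∈ T)) : satInd φ S = satInd φ T := by
  have : cnfSat S φ ↔ cnfSat T φ :=
    forall₂_congr fun c hc => clauseSat_congr fun v hv => h v (clauseVars_subset hc hv)
  simp [satInd, this]

/-- The satisfaction probability may be computed over any superset of the occurring variables. -/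
lemma satProb_eq_avg {φ : PCnf} {W : Finset ℕ} (h : cnfVars φ ⊆ W) :
    satProb φ = avg W (satInd φ) := by
  rw [← Finset.union_sdiff_of_subset h, avg_union Finset.disjoint_sdiff, satProb_eq_avg_vars]
  refine avg_congr fun A _ => ?_
  rw [← avg_const (W \ cnfVars φ) (satInd φ A)]
  refine avg_congr fun B hB => satInd_congr fun v hv => ?_
  have : v ∉ B := fun hvB => (Finset.mem_sdiff.1 (hB hvB)).2 hv
  simp [this]

lemma satInd_anti {ψ φ : PCnf} (h : ψ ⊆ φ) (S : Finset ℕ) : satInd φ S ≤ satInd ψ S := by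
  unfold satInd
  by_cases h1 : cnfSat S φ
  · rw [if_pos h1, if_pos (show cnfSat S ψ from fun c hc => h1 c (h hc))]
  · rw [if_neg h1]; split_ifs <;> norm_num

lemma satProb_anti {ψ φ : PCnf} (h : ψ ⊆ φ) : satProb φ ≤ satProb ψ := by
  rw [satProb_eq_avg (cnfVars_mono h), satProb_eq_avg_vars]
  exact avg_mono fun S _ => satInd_anti h S

lemma satProb_nonneg (φ : PCnf) : 0 ≤ satProb φ := by unfold satProb; positivity

lemma satProb_empty : satProb ∅ = 1 := by simp [satProb, cnfVars, cnfSat]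

lemma satProb_le_one (φ : PCnf) : satProb φ ≤ 1 :=
  satProb_empty ▸ satProb_anti (Finset.empty_subset φ)

lemma satProb_of_empty_mem {φ : PCnf} (h : ∅ ∈ φ) : satProb φ = 0 := by
  have : ∀ S, ¬ cnfSat S φ := fun S hS => by simpa [clauseSat] using hS ∅ h
  simp [satProb, this]

lemma IsKCnf.mono {k : ℕ} {ψ φ : PCnf} (hφ : IsKCnf k φ) (h : ψ ⊆ φ) : IsKCnf k ψ :=
  ⟨fun c hc => hφ.1 c (h hc), fun c hc => hφ.2 c (h hc)⟩

/-! ### Packings -/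

/-- The assignment making every positive variable of `c` false and every negative one true
falsifies `c`, so a clause of size at most `k` fails with probability at least `2⁻ᵏ`. -/
lemma avg_clauseSat_le {k : ℕ} {c : PClause} (hv : clauseValid c) (hk : c.card ≤ k) :
    avg (clauseVars c) (satInd {c}) ≤ 1 - (1 / 2) ^ k := by
  set A : Finset ℕ := (clauseVars c).filter (fun v => (v, false) ∈ c) with hA
  have hAsat : satInd {c} A = 0 := by
    have : ¬ cnfSat A {c} := by
      intro h
      obtain ⟨⟨v, b⟩, hl, hs⟩ := h c (by simp)
      have hvc : v ∈ clauseVars c := Finset.mem_image_of_mem Prod.fst hl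
      cases b
      · simp [litSat, hA, hl, hvc] at hs
      · simp only [litSat, if_true, hA, Finset.mem_filter] at hs
        exact hv v ⟨hl, hs.2⟩
    simp [satInd, this]
  have hmem : A ∈ (clauseVars c).powerset := by simp [hA]
  have hcard : (clauseVars c).card ≤ k := Finset.card_image_le.trans hk
  have hsum : ∑ S ∈ (clauseVars c).powerset, satInd {c} S ≤ 2 ^ (clauseVars c).card - 1 := by
    rw [← Finset.add_sum_erase _ _ hmem, hAsat, zero_add]
    calc _ ≤ ∑ S ∈ (clauseVars c).powerset.erase A, (1 : ℝ) := by
          gcongr; unfold satInd; split_ifs <;> norm_num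
      _ = _ := by
          rw [Finset.sum_const, Finset.card_erase_of_mem hmem, Finset.card_powerset]
          simp [Nat.cast_sub Nat.one_le_two_pow]
  unfold avg
  rw [div_le_iff₀ (by positivity), sub_mul, one_mul]
  have h1 : ((1 : ℝ) / 2) ^ k * 2 ^ (clauseVars c).card ≤ 1 := by
    calc ((1 : ℝ) / 2) ^ k * 2 ^ (clauseVars c).card ≤ (1 / 2) ^ k * 2 ^ k := by
          gcongr; norm_num
      _ = 1 := by rw [← mul_pow]; norm_num
  linarith

/-- Variable-disjoint clauses are independent events, each of probability at most `1 - 2⁻ᵏ`. -/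
lemma satProb_packing_le {k : ℕ} {π : PCnf} (hk : IsKCnf k π) (hp : IsPacking π) :
    satProb π ≤ (1 - (1 / 2) ^ k) ^ π.card := by
  induction π using Finset.induction_on with
  | empty => simp [satProb_empty]
  | insert c π hc ih =>
    have ih := ih (hk.mono (Finset.subset_insert c π)) fun a ha b hb =>
      hp a (Finset.mem_insert_of_mem ha) b (Finset.mem_insert_of_mem hb)
    have hdisj : Disjoint (clauseVars c) (cnfVars π) := by
      refine Finset.disjoint_sup_right.2 fun e he => ?_
      exact hp c (Finset.mem_insert_self _ _) e (Finset.mem_insert_of_mem he)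
        (fun h => hc (h ▸ he))
    have hvars : cnfVars (insert c π) = clauseVars c ∪ cnfVars π := by
      simp [cnfVars, Finset.sup_insert]
    have key : satProb (insert c π) = avg (clauseVars c) (satInd {c}) * satProb π := by
      rw [satProb_eq_avg_vars, hvars, avg_union hdisj, satProb_eq_avg_vars π, ← avg_mul_const]
      refine avg_congr fun A hA => ?_
      rw [← avg_const_mul]
      refine avg_congr fun B hB => ?_
      have e1 : clauseSat (A ∪ B) c ↔ clauseSat A c := clauseSat_congr fun v hv => by
        have : v ∉ B := fun h => Finset.disjoint_left.1 hdisj hv (hB h)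
        simp [this]
      have e2 : satInd π (A ∪ B) = satInd π B := satInd_congr fun v hv => by
        have : v ∉ A := fun h => Finset.disjoint_left.1 hdisj (hA h) hv
        simp [this]
      rw [← e2]
      have e3 : cnfSat (A ∪ B) (insert c π) ↔ clauseSat A c ∧ cnfSat (A ∪ B) π := by
        simp only [cnfSat, Finset.forall_mem_insert, e1]
      have e4 : cnfSat A {c} ↔ clauseSat A c := by simp [cnfSat]
      by_cases h1 : clauseSat A c <;> simp [satInd, e3, e4, h1]
    rw [key, Finset.card_insert_of_notMem hc, pow_succ']
    have h0 := avg_clauseSat_le (hk.1 c (Finset.mem_insert_self _ _))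
      (hk.2 c (Finset.mem_insert_self _ _))
    have : (0 : ℝ) ≤ avg (clauseVars c) (satInd {c}) := by
      rw [← avg_const (clauseVars c) 0]
      exact avg_mono fun S _ => by unfold satInd; split_ifs <;> norm_num
    exact mul_le_mul h0 ih (satProb_nonneg _) (this.trans h0)

/-- A greedily chosen packing either reaches `p` clauses, or its variables hit every clause. -/
lemma packing_or_hitting {k : ℕ} {φ : PCnf} (hk : IsKCnf k φ) (hne : ∅ ∉ φ) (p : ℕ) :
    (∃ π ⊆ φ, IsPacking π ∧ π.card = p) ∨
      ∃ V : Finset ℕ, V.card ≤ p * k ∧ ∀ c ∈ φ, ¬ Disjoint (clauseVars c) V := by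
  induction p with
  | zero => exact Or.inl ⟨∅, by simp, by simp [IsPacking], rfl⟩
  | succ p ih =>
    rcases ih with ⟨π, hπ, hp, hcard⟩ | ⟨V, hV, h⟩
    swap
    · exact Or.inr ⟨V, hV.trans (by gcongr; omega), h⟩
    by_cases h : ∀ c ∈ φ, ¬ Disjoint (clauseVars c) (cnfVars π)
    · refine Or.inr ⟨cnfVars π, ?_, h⟩
      calc (cnfVars π).card ≤ ∑ c ∈ π, (clauseVars c).card := by
            rw [cnfVars, Finset.sup_eq_biUnion]; exact Finset.card_biUnion_le
        _ ≤ ∑ c ∈ π, k := by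
            gcongr with c hc
            exact Finset.card_image_le.trans (hk.2 c (hπ hc))
        _ ≤ (p + 1) * k := by simp only [Finset.sum_const, hcard, smul_eq_mul]; gcongr; omega
    · push Not at h
      obtain ⟨c, hc, hd⟩ := h
      have hd' : ∀ e ∈ π, Disjoint (clauseVars c) (clauseVars e) := fun e he =>
        hd.mono_right (clauseVars_subset he)
      -- A clause variable-disjoint from itself is empty.
      have hcπ : c ∉ π := fun h => by
        have := hd' c h
        rw [disjoint_self, clauseVars, Finset.bot_eq_empty, Finset.image_eq_empty] at this
        exact hne (this ▸ hc)
      refine Or.inl ⟨insert c π, Finset.insert_subset hc hπ, ?_, by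
        rw [Finset.card_insert_of_notMem hcπ, hcard]⟩
      intro a ha b hb hab
      rcases Finset.mem_insert.1 ha with rfl | ha' <;>
        rcases Finset.mem_insert.1 hb with rfl | hb'
      · exact absurd rfl hab
      · exact hd' b hb'
      · exact (hd' a ha').symm
      · exact hp a ha' b hb' hab

/-! ### Conditioning on a partial assignment -/

/-- The clauses of `φ` not satisfied by the assignment `A` of the variables in `V`. -/
noncomputable def surviving (φ : PCnf) (V A : Finset ℕ) : PCnf :=
  φ.filter fun c => ¬ ∃ l ∈ c, l.1 ∈ V ∧ litSat A l

/-- The part of a clause over the variables outside `V`. -/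
noncomputable def residue (V : Finset ℕ) (c : PClause) : PClause := c.filter fun l => l.1 ∉ V

/-- The formula over the variables outside `V` that remains after assigning `A` to `V`. In
contrast to `restrict`, no unit clauses recording `A` are added. -/
noncomputable def reduct (φ : PCnf) (V A : Finset ℕ) : PCnf :=
  (surviving φ V A).image (residue V)

lemma reduct_mono {ψ φ : PCnf} (h : ψ ⊆ φ) (V A : Finset ℕ) :
    reduct ψ V A ⊆ reduct φ V A :=
  Finset.image_subset_image (Finset.filter_subset_filter _ h)

lemma cnfVars_reduct (φ : PCnf) (V A : Finset ℕ) :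
    cnfVars (reduct φ V A) ⊆ cnfVars φ \ V := by
  intro v hv
  simp only [cnfVars, Finset.mem_sup, reduct, Finset.mem_image, surviving, Finset.mem_filter] at hv
  obtain ⟨_, ⟨c, ⟨hc, _⟩, rfl⟩, hv⟩ := hv
  obtain ⟨l, hl, rfl⟩ := Finset.mem_image.1 hv
  rw [residue, Finset.mem_filter] at hl
  exact Finset.mem_sdiff.2 ⟨mem_cnfVars hc hl.1, hl.2⟩

lemma cnfSat_union {φ : PCnf} {V A B : Finset ℕ} (hA : A ⊆ V) (hB : Disjoint B V) :
    cnfSat (A ∪ B) φ ↔ cnfSat B (reduct φ V A) := by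
  have hin : ∀ l : PLit, l.1 ∈ V → (litSat (A ∪ B) l ↔ litSat A l) := fun l hl => by
    have : l.1 ∉ B := fun h => Finset.disjoint_left.1 hB h hl
    simp [litSat, this]
  have hout : ∀ l : PLit, l.1 ∉ V → (litSat (A ∪ B) l ↔ litSat B l) := fun l hl => by
    have : l.1 ∉ A := fun h => hl (hA h)
    simp [litSat, this]
  constructor
  · intro h c' hc'
    obtain ⟨c, hc, rfl⟩ := Finset.mem_image.1 hc'
    obtain ⟨hcφ, hns⟩ := Finset.mem_filter.1 hc
    obtain ⟨l, hl, hs⟩ := h c hcφ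
    by_cases hlV : l.1 ∈ V
    · exact absurd ⟨l, hl, hlV, (hin l hlV).1 hs⟩ hns
    · exact ⟨l, Finset.mem_filter.2 ⟨hl, hlV⟩, (hout l hlV).1 hs⟩
  · intro h c hc
    by_cases hs : ∃ l ∈ c, l.1 ∈ V ∧ litSat A l
    · obtain ⟨l, hl, hlV, hs⟩ := hs
      exact ⟨l, hl, (hin l hlV).2 hs⟩
    · obtain ⟨l, hl, hls⟩ := h (residue V c)
        (Finset.mem_image_of_mem _ (Finset.mem_filter.2 ⟨hc, hs⟩))
      obtain ⟨hl, hlV⟩ := Finset.mem_filter.1 hl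
      exact ⟨l, hl, (hout l hlV).2 hls⟩

/-- Law of total probability, conditioning on the assignment of `V`. -/
lemma satProb_eq_avg_reduct (φ : PCnf) (V : Finset ℕ) :
    satProb φ = avg V (fun A => satProb (reduct φ V A)) := by
  rw [satProb_eq_avg (W := V ∪ (cnfVars φ \ V)) (by
    rw [Finset.union_sdiff_self_eq_union]; exact Finset.subset_union_right),
    avg_union Finset.disjoint_sdiff]
  refine avg_congr fun A hA => ?_
  rw [satProb_eq_avg (cnfVars_reduct φ V A)]
  refine avg_congr fun B hB => ?_
  have hBV : Disjoint B V := Finset.disjoint_of_subset_left hB Finset.sdiff_disjoint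
  simp only [satInd, cnfSat_union hA hBV]

/-- If `V` hits every clause, then every residue is strictly shorter than its clause. -/
lemma IsKCnf.reduct {k : ℕ} {φ : PCnf} {V : Finset ℕ} (hk : IsKCnf (k + 1) φ)
    (hV : ∀ c ∈ φ, ¬ Disjoint (clauseVars c) V) (A : Finset ℕ) :
    IsKCnf k (reduct φ V A) := by
  have key : ∀ c' ∈ _root_.reduct φ V A, ∃ c ∈ φ, residue V c = c' := fun c' hc' => by
    obtain ⟨c, hc, rfl⟩ := Finset.mem_image.1 hc'
    exact ⟨c, (Finset.mem_filter.1 hc).1, rfl⟩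
  refine ⟨fun c' hc' => ?_, fun c' hc' => ?_⟩ <;> obtain ⟨c, hc, rfl⟩ := key c' hc'
  · exact fun v hv => hk.1 c hc v
      ⟨(Finset.mem_filter.1 hv.1).1, (Finset.mem_filter.1 hv.2).1⟩
  · obtain ⟨v, hvc, hvV⟩ := Finset.not_disjoint_iff.1 (hV c hc)
    obtain ⟨l, hl, rfl⟩ := Finset.mem_image.1 hvc
    have : residue V c ⊂ c := Finset.filter_ssubset.2 ⟨l, hl, by simpa using hvV⟩
    have := Finset.card_lt_card this
    have := hk.2 c hc
    omega

/-! ### Gap and approximation -/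

/-- A `0`CNF formula is either empty or consists of the empty clause. -/
lemma IsKCnf.subset_singleton {φ : PCnf} (h : IsKCnf 0 φ) : φ ⊆ {∅} := fun c hc => by
  simpa using h.2 c hc

lemma exists_packing_bound_lt (k : ℕ) {ε : ℝ} (hε : 0 < ε) :
    ∃ p : ℕ, ((1 : ℝ) - (1 / 2) ^ k) ^ p < ε :=
  exists_pow_lt_of_lt_one hε (by
    have : (0 : ℝ) < (1 / 2) ^ k := by positivity
    linarith)

/-- The possible probabilities that a random assignment falsifies a `k`CNF formula. -/
def unsatSpectrum (k : ℕ) : Set ℝ := {x | ∃ φ : PCnf, IsKCnf k φ ∧ 1 - satProb φ = x}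

/-- The failure probabilities below a fixed `x < 1` come from formulas hit by boundedly many
variables, so they are dyadic averages, with boundedly many possible denominators, of failure
probabilities of formulas with shorter clauses. Finite sums of elements of a well-ordered set of
nonnegative reals form a well-ordered set again. -/
lemma unsatSpectrum_isPWO (k : ℕ) : (unsatSpectrum k).IsPWO := by
  induction k with
  | zero =>
    refine (Set.toFinite ({0, 1} : Set ℝ)).isPWO.mono ?_
    rintro x ⟨φ, hφ, rfl⟩
    rcases Finset.subset_singleton_iff.1 hφ.subset_singleton with rfl | rfl
    · simp [satProb_empty]
    · simp [satProb_of_empty_mem]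
  | succ k ih =>
    have hcl : ((AddSubmonoid.closure (unsatSpectrum k) : AddSubmonoid ℝ) : Set ℝ).IsPWO :=
      Set.IsPWO.addSubmonoid_closure
        (by rintro x ⟨φ, _, rfl⟩; linarith [satProb_le_one φ]) ih
    have hlow : ∀ x < 1, (unsatSpectrum (k + 1) ∩ Set.Iio x).IsPWO := by
      intro x hx
      obtain ⟨p, hp⟩ := exists_packing_bound_lt (k + 1) (sub_pos.2 hx)
      have hfin : (⋃ m ∈ Finset.range (p * (k + 1) + 1), (fun y : ℝ => y / 2 ^ m) ''
          (AddSubmonoid.closure (unsatSpectrum k) : Set ℝ)).IsPWO := by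
        refine (Finset.isPWO_bUnion _).2 fun m _ => hcl.image_of_monotone fun a b hab => ?_
        gcongr
      refine hfin.mono ?_
      rintro _ ⟨⟨φ, hφ, rfl⟩, hlt⟩
      rw [Set.mem_Iio] at hlt
      have hne : ∅ ∉ φ := fun h => by rw [satProb_of_empty_mem h] at hlt; linarith
      rcases packing_or_hitting hφ hne p with ⟨π, hπ, hpack, hcard⟩ | ⟨V, hVc, hV⟩
      · have h1 := satProb_packing_le (hφ.mono hπ) hpack
        have h2 := satProb_anti hπ
        rw [hcard] at h1
        linarith
      · simp only [Set.mem_iUnion, Finset.mem_range]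
        refine ⟨V.card, by omega, ∑ A ∈ V.powerset, (1 - satProb (reduct φ V A)), ?_, ?_⟩
        · exact AddSubmonoid.sum_mem _ fun A _ =>
            AddSubmonoid.subset_closure ⟨_, hφ.reduct hV A, rfl⟩
        · have h1 := avg_const V 1
          have h2 := satProb_eq_avg_reduct φ V
          simp only [avg] at h1 h2
          simp only [Finset.sum_sub_distrib, sub_div, h1, h2]
    -- All values are at most `1`, so a sequence without increasing pair would enter
    -- some `Set.Iio x` with `x < 1` and stay there.
    refine Set.partiallyWellOrderedOn_iff_exists_lt.2 fun f hf => ?_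
    by_cases h : ∃ n, f n < 1
    · obtain ⟨n, hn⟩ := h
      by_cases h' : ∃ m, n < m ∧ f n ≤ f m
      · obtain ⟨m, hm, hle⟩ := h'
        exact ⟨n, m, hm, hle⟩
      · push Not at h'
        obtain ⟨a, b, hab, hle⟩ := (hlow (f n) hn).exists_lt
          (f := fun m => f (n + 1 + m)) fun m => ⟨hf _, h' _ (by omega)⟩
        exact ⟨_, _, by omega, hle⟩
    · push Not at h
      obtain ⟨φ, _, h0⟩ := hf 0
      exact ⟨0, 1, one_pos, by linarith [h 1, satProb_nonneg φ]⟩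

/-- Up to an additive error `ε`, the satisfaction probability of a `k`CNF formula is already
attained by a subformula of bounded size. -/
lemma exists_small_approx (k : ℕ) : ∀ ε : ℝ, 0 < ε → ∃ C : ℕ, ∀ φ : PCnf, IsKCnf k φ →
    ∃ ψ ⊆ φ, ψ.card ≤ C ∧ satProb ψ ≤ satProb φ + ε := by
  induction k with
  | zero =>
    intro ε hε
    refine ⟨1, fun φ hφ => ⟨φ, subset_rfl, ?_, by linarith⟩⟩
    simpa using Finset.card_le_card hφ.subset_singleton
  | succ k ih =>
    intro ε hε
    obtain ⟨C, hC⟩ := ih ε hε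
    obtain ⟨p, hp⟩ := exists_packing_bound_lt (k + 1) hε
    refine ⟨1 + p + 2 ^ (p * (k + 1)) * C, fun φ hφ => ?_⟩
    have h0 := satProb_nonneg φ
    by_cases hne : ∅ ∈ φ
    · refine ⟨{∅}, by simpa using hne, by simp only [Finset.card_singleton]; omega, ?_⟩
      rw [satProb_of_empty_mem (Finset.mem_singleton_self _)]
      linarith
    rcases packing_or_hitting hφ hne p with ⟨π, hπ, hpack, hcard⟩ | ⟨V, hVc, hV⟩
    · refine ⟨π, hπ, by omega, ?_⟩
      have h1 := satProb_packing_le (hφ.mono hπ) hpack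
      rw [hcard] at h1
      linarith
    · have hlift : ∀ A : Finset ℕ, ∃ ψ ⊆ surviving φ V A, ψ.card ≤ C ∧
          satProb (ψ.image (residue V)) ≤ satProb (reduct φ V A) + ε := by
        intro A
        obtain ⟨ψ', hψ', hc, hs⟩ := hC _ (hφ.reduct hV A)
        have hsurj : Set.SurjOn (residue V) (surviving φ V A) ψ' := by
          rw [Set.SurjOn, ← Finset.coe_image]
          exact Finset.coe_subset.2 hψ'
        obtain ⟨ψ, hψ, hinj, himg⟩ := Finset.exists_subset_injOn_image_eq_of_surjOn _ _ hsurj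
        refine ⟨ψ, Finset.coe_subset.1 hψ, ?_, by rw [himg]; exact hs⟩
        rwa [← Finset.card_image_of_injOn hinj, himg]
      choose ψ hψ hcard hs using hlift
      refine ⟨V.powerset.biUnion ψ, ?_, ?_, ?_⟩
      · exact Finset.biUnion_subset.2 fun A _ => (hψ A).trans (Finset.filter_subset _ _)
      · have h1 := Finset.card_biUnion_le_card_mul V.powerset ψ C fun A _ => hcard A
        rw [Finset.card_powerset] at h1
        have h2 : 2 ^ V.card * C ≤ 2 ^ (p * (k + 1)) * C := by gcongr; norm_num
        omega
      · rw [satProb_eq_avg_reduct _ V, satProb_eq_avg_reduct φ V, ← avg_const V ε, ← avg_add]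
        refine avg_mono fun A hA => le_trans (satProb_anti ?_) (hs A)
        refine Finset.image_subset_image fun c hc => Finset.mem_filter.2
          ⟨Finset.mem_biUnion.2 ⟨A, Finset.mem_powerset.2 hA, hc⟩, ?_⟩
        exact (Finset.mem_filter.1 (hψ A hc)).2

/-- **Threshold Locality Lemma.** For every `k` and `δ ∈ [0,1]` there is a
constant `C` such that a `k`CNF formula `φ` has `σ(φ) ≥ δ` iff `σ(ψ) ≥ δ` holds
for every subformula `ψ ⊆ φ` with at most `C` clauses. -/
theorem threshold_locality (k : ℕ) (δ : ℝ) (h0 : 0 ≤ δ) (h1 : δ ≤ 1) :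
    ∃ C : ℕ, ∀ φ : PCnf, IsKCnf k φ →
      (satProb φ ≥ δ ↔ ∀ ψ ⊆ φ, ψ.card ≤ C → satProb ψ ≥ δ) := by
  have hgap : ∃ ε > 0, ∀ φ : PCnf, IsKCnf k φ → satProb φ < δ → satProb φ ≤ δ - ε := by
    by_cases hne : (unsatSpectrum k ∩ Set.Ioi (1 - δ)).Nonempty
    · obtain ⟨t, ⟨ht, htδ⟩, hmin⟩ :=
        ((unsatSpectrum_isPWO k).mono Set.inter_subset_left).exists_minimal hne
      rw [Set.mem_Ioi] at htδ
      refine ⟨t - (1 - δ), by linarith, fun φ hφ hlt => ?_⟩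
      by_contra! hcon
      have := hmin (y := 1 - satProb φ) ⟨⟨φ, hφ, rfl⟩, by rw [Set.mem_Ioi]; linarith⟩
        (by linarith)
      linarith
    · exact ⟨1, one_pos, fun φ hφ hlt =>
        absurd ⟨1 - satProb φ, ⟨φ, hφ, rfl⟩, by rw [Set.mem_Ioi]; linarith⟩ hne⟩
  obtain ⟨ε, hε, hgap⟩ := hgap
  obtain ⟨C, hC⟩ := exists_small_approx k (ε / 2) (by linarith)
  refine ⟨C, fun φ hφ => ⟨fun h ψ hψ _ => h.trans (satProb_anti hψ), fun h => ?_⟩⟩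
  by_contra! hlt
  obtain ⟨ψ, hψ, hcard, hs⟩ := hC φ hφ
  have := h ψ hψ hcard
  have := hgap φ hφ hlt
  linarith
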